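/- Suppose lim_{x→a⁺} s(x) = ∞, the right boundary b is natural (lim_{x→b} s(x)·M[a,x] = ∞ and ∫_{x₀}^{b} M[x₀,v] s(v) dv = ∞), μ extends continuously to x = a with a finite value μ(a), there exists x̂₀ ∈ (a,b) such that μ is strictly increasing on (a, x̂₀) and both c and μ are concave on (x̂₀, b), and there exists a pair (w̃,ỹ) with a < w̃ < ỹ < b and F(w̃,ỹ) > γ c̄(b). Then there exist points x̂ ≤ x̃ in (a,b) such that the revenue rate r(x) = γ c(x) + p μ(x) is strictly increasing on (a, x̂), constant on (x̂, x̃), and strictly decreasing on (x̃, b). -/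

import Mathlib

open MeasureTheory Filter Set Topology
open scoped Classical

noncomputable section

/-- The state interval `(a, b)` where `a` is real and `b ∈ (a, ∞]`. -/
def stInt (a : ℝ) (b : EReal) : Set ℝ := {x : ℝ | a < x ∧ (x : EReal) < b}

/-- The filter of approach to the right endpoint `b ∈ (a, ∞]`:
`atTop` when `b = ∞`, and the left-neighborhood filter of `b` otherwise. -/
def atB (b : EReal) : Filter ℝ :=
  if b = ⊤ then Filter.atTop else nhdsWithin b.toReal (Set.Iio b.toReal)

/-- The scale density `s(x) = exp(-∫_{x₀}^x 2μ/σ²)`. -/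
def sDen (μ σ : ℝ → ℝ) (x₀ x : ℝ) : ℝ :=
  Real.exp (-(∫ y in x₀..x, 2 * μ y / (σ y) ^ 2))

/-- The speed density `m(x) = 2/(σ(x)² s(x))`. -/
def mDen (μ σ : ℝ → ℝ) (x₀ x : ℝ) : ℝ :=
  2 / ((σ x) ^ 2 * sDen μ σ x₀ x)

/-- `M[a,x] = ∫_a^x m(u) du`. -/
def Mab (μ σ : ℝ → ℝ) (x₀ a x : ℝ) : ℝ :=
  ∫ u in Set.Ioo a x, mDen μ σ x₀ u

/-- The time potential `ξ(x) = ∫_{x₀}^x M[a,v] s(v) dv`. -/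
def xiF (μ σ : ℝ → ℝ) (x₀ a x : ℝ) : ℝ :=
  ∫ v in x₀..x, Mab μ σ x₀ a v * sDen μ σ x₀ v

/-- The running reward potential `g(x) = ∫_{x₀}^x (∫_a^v c(u) m(u) du) s(v) dv`. -/
def gF (μ σ c : ℝ → ℝ) (x₀ a x : ℝ) : ℝ :=
  ∫ v in x₀..x, (∫ u in Set.Ioo a v, c u * mDen μ σ x₀ u) * sDen μ σ x₀ v

/-- `h(x) = (∫_a^x (γ c(u) + p μ(u)) m(u) du) / M[a,x]`. -/
def hF (μ σ c : ℝ → ℝ) (x₀ a p γ x : ℝ) : ℝ :=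
  (∫ u in Set.Ioo a x, (γ * c u + p * μ u) * mDen μ σ x₀ u) / Mab μ σ x₀ a x

/-- The long-term average reward `F(w,y)` of the `(w,y)`-impulse policy. -/
def FF (μ σ c : ℝ → ℝ) (x₀ a p K γ w y : ℝ) : ℝ :=
  (p * (y - w) - K + γ * (gF μ σ c x₀ a y - gF μ σ c x₀ a w)) /
    (xiF μ σ x₀ a y - xiF μ σ x₀ a w)

/-- `c̄(b)`: equals `⟨c,π⟩` when `M[a,b] < ∞` and the boundary value `c(b)` otherwise. -/
def cbar (μ σ c : ℝ → ℝ) (x₀ a : ℝ) (b : EReal) (cb : ℝ) : ℝ :=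
  if MeasureTheory.IntegrableOn (mDen μ σ x₀) (stInt a b) MeasureTheory.volume then
    (∫ u in stInt a b, c u * mDen μ σ x₀ u) / (∫ u in stInt a b, mDen μ σ x₀ u)
  else cb

/-!
Suppose the revenue rate `r = γ c + p μ` were increasing on all of `(a, b)`. Then its running mean
`h(x) = M[a,x]⁻¹ ∫_a^x r m` is increasing as well. Since `(1/s)' = μ m` and `1/s → 0` at `a`, we
have `h = γ ⟨c⟩ + p / (s M)`, where `⟨c⟩` is the running mean of `c`; as `⟨c⟩ ≤ c̄(b)` and
`s M → ∞` at `b`, this forces `h ≤ γ c̄(b)` everywhere. Multiplying by `s M` turns the same identity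
into `p + γ g' = h ξ'`, whose integral over `[w, y]` gives `F(w, y) ≤ γ c̄(b)`: a contradiction. So
`r` decreases somewhere, necessarily beyond `x̂₀`, and concavity there yields the three phases, the
flat one being the interval of maximizers of `r`.
-/

section Unimodal

theorem concaveOn_of_subset_closure {E : Type*} [AddCommGroup E] [Module ℝ E] [TopologicalSpace E]
    [ContinuousAdd E] [ContinuousConstSMul ℝ E] {f : E → ℝ} {S T : Set E} (hT : Convex ℝ T)
    (hf : ConcaveOn ℝ S f) (hST : S ⊆ T) (hTS : T ⊆ closure S) (hfT : ContinuousOn f T) :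
    ConcaveOn ℝ T f := by
  refine ⟨hT, fun x hx y hy t s ht hs hts ↦ ?_⟩
  have := mem_closure_iff_nhdsWithin_neBot.1 (hTS hx)
  have := mem_closure_iff_nhdsWithin_neBot.1 (hTS hy)
  have hfst : Tendsto Prod.fst (𝓝[S] x ×ˢ 𝓝[S] y) (𝓝[S] x) := tendsto_fst
  have hsnd : Tendsto Prod.snd (𝓝[S] x ×ˢ 𝓝[S] y) (𝓝[S] y) := tendsto_snd
  have hmem : ∀ᶠ q in 𝓝[S] x ×ˢ 𝓝[S] y, q.1 ∈ S ∧ q.2 ∈ S :=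
    eventually_mem_nhdsWithin.prod_mk eventually_mem_nhdsWithin
  have hcomb : Tendsto (fun q : E × E ↦ t • q.1 + s • q.2) (𝓝[S] x ×ˢ 𝓝[S] y)
      (𝓝[T] (t • x + s • y)) := by
    refine tendsto_nhdsWithin_iff.2
      ⟨((hfst.mono_right nhdsWithin_le_nhds).const_smul t).add
        ((hsnd.mono_right nhdsWithin_le_nhds).const_smul s), ?_⟩
    filter_upwards [hmem] with q hq using hST (hf.1 hq.1 hq.2 ht hs hts)
  refine le_of_tendsto_of_tendsto
    (((((hfT x hx).mono hST).tendsto.comp hfst).const_smul t).add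
      ((((hfT y hy).mono hST).tendsto.comp hsnd).const_smul s))
    ((hfT _ (hT hx hy ht hs hts)).tendsto.comp hcomb) ?_
  filter_upwards [hmem] with q hq using hf.2 hq.1 hq.2 ht hs hts

theorem strictMonoOn_inter_Iic_of_inter_Iio {α β : Type*} [LinearOrder α] [TopologicalSpace α]
    [OrderTopology α] [DenselyOrdered α] [LinearOrder β] [TopologicalSpace β]
    [OrderClosedTopology β] {f : α → β} {S : Set α} {z : α} [OrdConnected S]
    (hf : ContinuousOn f S) (hmono : StrictMonoOn f (S ∩ Iio z)) :
    StrictMonoOn f (S ∩ Iic z) := by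
  rintro x ⟨hxS, -⟩ y ⟨hyS, hyz : y ≤ z⟩ hxy
  obtain ⟨t, hxt, hty⟩ := exists_between hxy
  have hmem : ∀ u, x ≤ u → u < y → u ∈ S ∩ Iio z := fun u hxu huy ↦
    ⟨Set.Icc_subset S hxS hyS ⟨hxu, huy.le⟩, huy.trans_le hyz⟩
  have : (𝓝[Ioo t y] y).NeBot := right_nhdsWithin_Ioo_neBot hty
  have hle : f t ≤ f y := by
    have hsub : Ioo t y ⊆ S := fun u hu ↦ (hmem u (hxt.trans hu.1).le hu.2).1
    refine ge_of_tendsto ((hf y hyS).mono hsub) ?_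
    filter_upwards [self_mem_nhdsWithin] with u hu
    exact (hmono (hmem t hxt.le hty) (hmem u (hxt.trans hu.1).le hu.2) hu.1).le
  exact (hmono (hmem x le_rfl hxy) (hmem t hxt.le hty) hxt).trans_le hle

/-- The set of points of `S` at which `f` attains its maximum over `S`. -/
def argmaxOn {α β : Type*} [Preorder β] (f : α → β) (S : Set α) : Set α :=
  {x ∈ S | IsMaxOn f S x}

theorem lt_of_mem_argmaxOn {α β : Type*} [LinearOrder β] {f : α → β} {S : Set α} {x y : α}
    (hx : x ∈ argmaxOn f S) (hyS : y ∈ S) (hy : y ∉ argmaxOn f S) : f y < f x :=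
  lt_of_not_ge fun hxy ↦ hy ⟨hyS, fun _ ht ↦ (hx.2 ht).trans hxy⟩

section LinearOrderedField

variable {𝕜 : Type*} [Field 𝕜] [LinearOrder 𝕜] [IsStrictOrderedRing 𝕜] {f : 𝕜 → 𝕜} {S : Set 𝕜}

theorem strictMonoOn_of_isLeast_argmaxOn (hconc : ConcaveOn 𝕜 S f) {l : 𝕜}
    (hl : IsLeast (argmaxOn f S) l) : StrictMonoOn f (S ∩ Iic l) := by
  rintro x ⟨hx, -⟩ y ⟨hy, hyl : y ≤ l⟩ hxy
  have hlt : ∀ t ∈ S, t < l → f t < f l := fun t ht htl ↦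
    lt_of_mem_argmaxOn hl.1 ht fun h ↦ (hl.2 h).not_gt htl
  rcases hyl.eq_or_lt with rfl | hyl
  · exact hlt x hx hxy
  · exact hconc.strictMonoOn hl.1.1 hyl (hlt y hy hyl) ⟨hx, hxy.le⟩ ⟨hy, self_mem_Iic⟩ hxy

theorem strictAntiOn_of_isGreatest_argmaxOn (hconc : ConcaveOn 𝕜 S f) {r : 𝕜}
    (hr : IsGreatest (argmaxOn f S) r) : StrictAntiOn f (S ∩ Ici r) := by
  rintro x ⟨hx, hrx : r ≤ x⟩ y ⟨hy, -⟩ hxy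
  have hlt : ∀ t ∈ S, r < t → f t < f r := fun t ht hrt ↦
    lt_of_mem_argmaxOn hr.1 ht fun h ↦ (hr.2 h).not_gt hrt
  rcases hrx.eq_or_lt with rfl | hrx
  · exact hlt y hy hxy
  · exact hconc.strictAntiOn hr.1.1 hrx (hlt x hx hrx) ⟨hx, self_mem_Ici⟩ ⟨hy, hxy.le⟩ hxy

theorem eq_of_mem_Icc_argmaxOn (hconc : ConcaveOn 𝕜 S f) {l r x : 𝕜} (hl : l ∈ argmaxOn f S)
    (hr : r ∈ argmaxOn f S) (hx : x ∈ Icc l r) : f x = f l := by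
  have hxS : x ∈ S := hconc.1.ordConnected.out hl.1 hr.1 hx
  refine (hl.2 hxS).antisymm ?_
  calc f l ≤ min (f l) (f r) := le_min le_rfl (hr.2 hl.1)
    _ ≤ f x := hconc.min_le_of_mem_Icc hl.1 hr.1 hx

end LinearOrderedField

variable {f : ℝ → ℝ} {S : Set ℝ}

theorem exists_isLeast_isGreatest_argmaxOn [OrdConnected S] (hconc : ConcaveOn ℝ S f)
    (hf : ContinuousOn f S) (hbdd : ∃ z, IsLeast S z) (hnot : ¬ MonotoneOn f S) :
    ∃ l r, IsLeast (argmaxOn f S) l ∧ IsGreatest (argmaxOn f S) r := by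
  obtain ⟨z, hzS, hz⟩ := hbdd
  obtain ⟨u, hu, v, hv, huv, hlt⟩ : ∃ u ∈ S, ∃ v ∈ S, u ≤ v ∧ f v < f u := by
    simpa only [MonotoneOn, not_forall, not_le, exists_prop] using hnot
  have huv' : u < v := huv.lt_of_ne fun h ↦ hlt.ne' (congrArg f h)
  have hright : ∀ x ∈ S, v < x → f x < f u := fun x hx hvx ↦
    (hconc.strictAntiOn hu huv' hlt ⟨hv, self_mem_Ici⟩ ⟨hx, hvx.le⟩ hvx).trans hlt
  have hsub : Icc z v ⊆ S := Set.Icc_subset S hzS hv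
  obtain ⟨x, hx, hmax⟩ := isCompact_Icc.exists_isMaxOn ⟨u, hz hu, huv⟩ (hf.mono hsub)
  have hux : f u ≤ f x := hmax ⟨hz hu, huv⟩
  have hargmax : argmaxOn f S = Icc z v ∩ f ⁻¹' Ici (f x) := by
    ext y
    refine ⟨fun hy ↦ ⟨⟨hz hy.1, ?_⟩, hy.2 (hsub hx)⟩, fun hy ↦ ⟨hsub hy.1, fun t ht ↦ ?_⟩⟩
    · exact not_lt.1 fun hvy ↦ (hright y hy.1 hvy).not_ge (hy.2 hu)
    · rcases le_or_gt t v with htv | hvt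
      · exact (hmax ⟨hz ht, htv⟩).trans (mem_preimage.1 hy.2)
      · exact ((hright t ht hvt).le.trans hux).trans (mem_preimage.1 hy.2)
  have hcompact : IsCompact (argmaxOn f S) := hargmax ▸ isCompact_Icc.of_isClosed_subset
    ((hf.mono hsub).preimage_isClosed_of_isClosed isClosed_Icc isClosed_Ici) inter_subset_left
  have hne : (argmaxOn f S).Nonempty := hargmax ▸ ⟨x, hx, le_refl (f x)⟩
  obtain ⟨l, hl⟩ := hcompact.exists_isLeast hne
  obtain ⟨r, hr⟩ := hcompact.exists_isGreatest hne
  exact ⟨l, r, hl, hr⟩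

theorem exists_strictMonoOn_const_strictAntiOn [OrdConnected S] (hS : IsOpen S)
    (hf : ContinuousOn f S) {z : ℝ} (hz : z ∈ S) (hmono : StrictMonoOn f (S ∩ Iio z))
    (hconc : ConcaveOn ℝ (S ∩ Ioi z) f) (hnot : ¬ MonotoneOn f S) :
    ∃ l ∈ S, ∃ r ∈ S, l ≤ r ∧ StrictMonoOn f (S ∩ Iio l) ∧ (∀ x ∈ Icc l r, f x = f l) ∧
      StrictAntiOn f (S ∩ Ioi r) := by
  have hmono' : StrictMonoOn f (S ∩ Iic z) := strictMonoOn_inter_Iic_of_inter_Iio hf hmono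
  have hconc' : ConcaveOn ℝ (S ∩ Ici z) f := by
    refine concaveOn_of_subset_closure (OrdConnected.convex inferInstance) hconc
      (inter_subset_inter_right S Ioi_subset_Ici_self) ?_ (hf.mono inter_subset_left)
    rw [← closure_Ioi z]
    exact hS.inter_closure
  have hleast : IsLeast (S ∩ Ici z) z := ⟨⟨hz, self_mem_Ici⟩, fun x hx ↦ hx.2⟩
  have hgreatest : IsGreatest (S ∩ Iic z) z := ⟨⟨hz, self_mem_Iic⟩, fun x hx ↦ hx.2⟩
  have hnot' : ¬ MonotoneOn f (S ∩ Ici z) := fun h ↦ hnot <| by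
    simpa only [← inter_union_distrib_left, Iic_union_Ici, inter_univ] using
      hmono'.monotoneOn.union_right h hgreatest hleast
  obtain ⟨l, r, hl, hr⟩ := exists_isLeast_isGreatest_argmaxOn hconc'
    (hf.mono inter_subset_left) ⟨z, hleast⟩ hnot'
  have hzl : z ≤ l := hl.1.1.2
  have hzr : z ≤ r := hr.1.1.2
  refine ⟨l, hl.1.1.1, r, hr.1.1.1, hl.2 hr.1, ?_,
    fun x hx ↦ eq_of_mem_Icc_argmaxOn hconc' hl.1 hr.1 hx, ?_⟩
  · have hmono_zl := strictMonoOn_of_isLeast_argmaxOn hconc' hl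
    refine (hmono'.union hmono_zl hgreatest
      ⟨⟨hleast.1, hzl⟩, fun x hx ↦ hx.1.2⟩).mono fun x hx ↦ ?_
    exact (le_total x z).imp (fun h ↦ ⟨hx.1, h⟩) fun h ↦ ⟨⟨hx.1, h⟩, (mem_Iio.1 hx.2).le⟩
  · exact (strictAntiOn_of_isGreatest_argmaxOn hconc' hr).mono
      fun x hx ↦ ⟨⟨hx.1, hzr.trans (mem_Ioi.1 hx.2).le⟩, (mem_Ioi.1 hx.2).le⟩

end Unimodal

section WeightedMean

variable {α : Type*} [MeasurableSpace α] {ν : Measure α} {m f : α → ℝ} {S T : Set α} {k : ℝ}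

/-- The mean of `f` over `S` with respect to the weighted measure `m dν`, used for averages against
the speed measure; it is `0` when `S` has weighted mass `0`. -/
def weightedMean (ν : Measure α) (m f : α → ℝ) (S : Set α) : ℝ :=
  (∫ x in S, f x * m x ∂ν) / ∫ x in S, m x ∂ν

theorem integrableOn_mul_of_isBounded_image [TopologicalSpace α] [OpensMeasurableSpace α]
    (hS : MeasurableSet S) (hf : ContinuousOn f S) (hbdd : Bornology.IsBounded (f '' S))
    (hm : IntegrableOn m S ν) : IntegrableOn (fun x ↦ f x * m x) S ν := by
  obtain ⟨C, hC⟩ := hbdd.exists_norm_le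
  exact Integrable.bdd_mul hm (hf.aestronglyMeasurable hS)
    (ae_restrict_of_forall_mem hS fun x hx ↦ hC _ (mem_image_of_mem f hx))

theorem setIntegral_mul_le_const_mul (hS : MeasurableSet S) (hm : ∀ x ∈ S, 0 ≤ m x)
    (hmS : IntegrableOn m S ν) (hfS : IntegrableOn (fun x ↦ f x * m x) S ν)
    (hf : ∀ x ∈ S, f x ≤ k) : ∫ x in S, f x * m x ∂ν ≤ k * ∫ x in S, m x ∂ν := by
  rw [← integral_const_mul]
  exact setIntegral_mono_on hfS (hmS.const_mul k) hS
    fun x hx ↦ mul_le_mul_of_nonneg_right (hf x hx) (hm x hx)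

theorem const_mul_le_setIntegral_mul (hS : MeasurableSet S) (hm : ∀ x ∈ S, 0 ≤ m x)
    (hmS : IntegrableOn m S ν) (hfS : IntegrableOn (fun x ↦ f x * m x) S ν)
    (hf : ∀ x ∈ S, k ≤ f x) : k * ∫ x in S, m x ∂ν ≤ ∫ x in S, f x * m x ∂ν := by
  rw [← integral_const_mul]
  exact setIntegral_mono_on (hmS.const_mul k) hfS hS
    fun x hx ↦ mul_le_mul_of_nonneg_right (hf x hx) (hm x hx)

theorem weightedMean_le_weightedMean_of_subset (hS : MeasurableSet S) (hT : MeasurableSet T)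
    (hST : S ⊆ T) (hm : ∀ x ∈ T, 0 ≤ m x) (hmT : IntegrableOn m T ν)
    (hfT : IntegrableOn (fun x ↦ f x * m x) T ν) (hpos : 0 < ∫ x in S, m x ∂ν)
    (hle : ∀ x ∈ S, f x ≤ k) (hge : ∀ x ∈ T \ S, k ≤ f x) :
    weightedMean ν m f S ≤ weightedMean ν m f T := by
  have hmD : 0 ≤ ∫ x in T \ S, m x ∂ν := setIntegral_nonneg (hT.diff hS) fun x hx ↦ hm x hx.1
  have hupper : ∫ x in S, f x * m x ∂ν ≤ k * ∫ x in S, m x ∂ν :=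
    setIntegral_mul_le_const_mul hS (fun x hx ↦ hm x (hST hx)) (hmT.mono_set hST)
      (hfT.mono_set hST) hle
  have hlower : k * ∫ x in T \ S, m x ∂ν ≤ ∫ x in T \ S, f x * m x ∂ν :=
    const_mul_le_setIntegral_mul (hT.diff hS) (fun x hx ↦ hm x hx.1) (hmT.mono_set sdiff_subset)
      (hfT.mono_set sdiff_subset) hge
  have hsplit_m := setIntegral_sdiff hS hmT hST
  have hsplit_f := setIntegral_sdiff hS hfT hST
  rw [weightedMean, weightedMean, div_le_div_iff₀ hpos (by linarith)]
  rw [eq_sub_iff_add_eq'] at hsplit_m hsplit_f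
  rw [← hsplit_m, ← hsplit_f]
  nlinarith only [mul_le_mul_of_nonneg_right hupper hmD, mul_le_mul_of_nonneg_right hlower hpos.le]

theorem weightedMean_inter_Iio_le [LinearOrder α] [TopologicalSpace α] [OrderClosedTopology α]
    [OpensMeasurableSpace α] {x : α} (hT : MeasurableSet T) (hm : ∀ x ∈ T, 0 ≤ m x)
    (hmT : IntegrableOn m T ν) (hfT : IntegrableOn (fun x ↦ f x * m x) T ν)
    (hf : MonotoneOn f T) (hx : x ∈ T) (hpos : 0 < ∫ u in T ∩ Iio x, m u ∂ν) :
    weightedMean ν m f (T ∩ Iio x) ≤ weightedMean ν m f T :=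
  weightedMean_le_weightedMean_of_subset (hT.inter measurableSet_Iio) hT inter_subset_left hm hmT
    hfT hpos (fun _ ht ↦ hf ht.1 hx (mem_Iio.1 ht.2).le)
    fun _ ht ↦ hf hx ht.1 (not_lt.1 fun htx ↦ ht.2 ⟨ht.1, htx⟩)

end WeightedMean

theorem isBounded_image_Ioo_of_tendsto {α β : Type*} [ConditionallyCompleteLinearOrder α]
    [DenselyOrdered α] [TopologicalSpace α] [OrderTopology α] [MetricSpace β] {f : α → β}
    {a x : α} {l r : β} (hf : ContinuousOn f (Ioo a x)) (ha : Tendsto f (𝓝[>] a) (𝓝 l))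
    (hx : Tendsto f (𝓝[<] x) (𝓝 r)) : Bornology.IsBounded (f '' Ioo a x) := by
  have hext : ContinuousOn (extendFrom (Ioo a x) f) (Icc a x) :=
    continuousOn_Icc_extendFrom_Ioo hf ha hx
  refine (isCompact_Icc.image_of_continuousOn hext).isBounded.subset ?_
  rintro _ ⟨t, ht, rfl⟩
  exact ⟨t, Ioo_subset_Icc_self ht, extendFrom_eq (subset_closure ht) (hf t ht)⟩

section Primitive

variable {E : Type*} [NormedAddCommGroup E] {S : Set ℝ} [OrdConnected S] {q : ℝ → E} {x₀ x : ℝ}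

theorem intervalIntegrable_of_continuousOn_of_mem (hq : ContinuousOn q S) (hx₀ : x₀ ∈ S)
    (hx : x ∈ S) : IntervalIntegrable q volume x₀ x :=
  (hq.mono (OrdConnected.uIcc_subset ‹_› hx₀ hx)).intervalIntegrable

theorem hasDerivAt_intervalIntegral_of_continuousOn [NormedSpace ℝ E] [CompleteSpace E]
    (hS : IsOpen S) (hq : ContinuousOn q S) (hx₀ : x₀ ∈ S) (hx : x ∈ S) :
    HasDerivAt (fun x ↦ ∫ y in x₀..x, q y) (q x) x :=
  intervalIntegral.integral_hasDerivAt_right (intervalIntegrable_of_continuousOn_of_mem hq hx₀ hx)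
    (hq.stronglyMeasurableAtFilter hS x hx) (hq.continuousAt (hS.mem_nhds hx))

end Primitive

section StateInterval

variable {a : ℝ} {b : EReal} {x : ℝ}

theorem isOpen_stInt (a : ℝ) (b : EReal) : IsOpen (stInt a b) :=
  isOpen_Ioi.inter (isOpen_Iio.preimage continuous_coe_real_ereal)

instance ordConnected_stInt (a : ℝ) (b : EReal) : OrdConnected (stInt a b) :=
  ordConnected_Ioi.inter (ordConnected_Iio.preimage_mono EReal.coe_strictMono.monotone)

theorem stInt_inter_Ioi (hx : x ∈ stInt a b) : stInt a b ∩ Ioi x = stInt x b :=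
  Set.ext fun _ ↦ ⟨fun ht ↦ ⟨ht.2, ht.1.2⟩, fun ht ↦ ⟨⟨hx.1.trans ht.1, ht.2⟩, ht.1⟩⟩

theorem stInt_inter_Iio (hx : x ∈ stInt a b) : stInt a b ∩ Iio x = Ioo a x :=
  Set.ext fun _ ↦ ⟨fun ht ↦ ⟨ht.1.1, ht.2⟩,
    fun ht ↦ ⟨⟨ht.1, (EReal.coe_lt_coe ht.2).trans hx.2⟩, ht.2⟩⟩

theorem Ioo_subset_stInt (hx : x ∈ stInt a b) : Ioo a x ⊆ stInt a b :=
  stInt_inter_Iio hx ▸ inter_subset_left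

instance neBot_atB (b : EReal) : (atB b).NeBot := by
  unfold atB
  split_ifs <;> infer_instance

theorem eventually_mem_stInt_atB (hx : (x : EReal) < b) : ∀ᶠ y in atB b, y ∈ stInt x b := by
  induction b with
  | bot => exact absurd hx not_lt_bot
  | top => simpa [atB, stInt] using eventually_gt_atTop x
  | coe r =>
    have hxr : x < r := EReal.coe_lt_coe_iff.1 hx
    simp only [atB, EReal.coe_ne_top, if_false, EReal.toReal_coe]
    filter_upwards [Ioo_mem_nhdsLT hxr] with y hy using ⟨hy.1, EReal.coe_lt_coe hy.2⟩

theorem le_of_monotoneOn_of_tendsto_atB {c : ℝ → ℝ} {cb : ℝ} (hc : MonotoneOn c (stInt a b))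
    (hcb : Tendsto c (atB b) (𝓝 cb)) (hx : x ∈ stInt a b) : c x ≤ cb := by
  refine ge_of_tendsto hcb ?_
  filter_upwards [eventually_mem_stInt_atB hx.2] with y hy
  exact hc hx ⟨hx.1.trans hy.1, hy.2⟩ hy.1.le

theorem isBounded_image_of_monotoneOn_of_tendsto_atB {c : ℝ → ℝ} {cb : ℝ}
    (hc : MonotoneOn c (stInt a b)) (hcb : Tendsto c (atB b) (𝓝 cb))
    (hbdd : BddBelow (c '' stInt a b)) : Bornology.IsBounded (c '' stInt a b) :=
  Metric.isBounded_of_bddAbove_of_bddBelow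
    ⟨cb, forall_mem_image.2 fun _ hx ↦ le_of_monotoneOn_of_tendsto_atB hc hcb hx⟩ hbdd

theorem continuousOn_setIntegral_Ioo {E : Type*} [NormedAddCommGroup E] [NormedSpace ℝ E]
    {f : ℝ → E} (hf : ∀ x ∈ stInt a b, IntegrableOn f (Ioo a x)) :
    ContinuousOn (fun x ↦ ∫ u in Ioo a x, f u) (stInt a b) := by
  intro x hx
  obtain ⟨y, hxy, hyb⟩ := (eventually_mem_stInt_atB hx.2).exists
  have hprim := intervalIntegral.continuousOn_primitive (μ := volume)
    ((integrableOn_Icc_iff_integrableOn_Ioo).2 (hf y ⟨hx.1.trans hxy, hyb⟩))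
  simp only [integral_Ioc_eq_integral_Ioo] at hprim
  exact (hprim.continuousAt (Icc_mem_nhds hx.1 hxy)).continuousWithinAt

end StateInterval

theorem sDen_pos (μ σ : ℝ → ℝ) (x₀ x : ℝ) : 0 < sDen μ σ x₀ x := Real.exp_pos _

theorem mDen_nonneg (μ σ : ℝ → ℝ) (x₀ x : ℝ) : 0 ≤ mDen μ σ x₀ x :=
  div_nonneg zero_le_two (mul_nonneg (sq_nonneg _) (sDen_pos μ σ x₀ x).le)

theorem integrableOn_revenue_mul_mDen {μ σ c : ℝ → ℝ} {x₀ p γ : ℝ} {S : Set ℝ}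
    (hcm : IntegrableOn (fun u ↦ c u * mDen μ σ x₀ u) S)
    (hμm : IntegrableOn (fun u ↦ μ u * mDen μ σ x₀ u) S) :
    IntegrableOn (fun u ↦ (γ * c u + p * μ u) * mDen μ σ x₀ u) S := by
  have hsum : IntegrableOn (fun u ↦ γ * (c u * mDen μ σ x₀ u) + p * (μ u * mDen μ σ x₀ u)) S :=
    (hcm.const_mul γ).add (hμm.const_mul p)
  simpa only [add_mul, mul_assoc] using hsum

/-- The standing assumptions on a one-dimensional diffusion on `stInt a b`: continuous drift `μ`,
continuous non-degenerate volatility `σ`, a base point `x₀` for the scale density, and a speed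
measure that is finite near `a`. -/
structure RegularDiffusion (a : ℝ) (b : EReal) (μ σ : ℝ → ℝ) (x₀ : ℝ) : Prop where
  base_mem : x₀ ∈ stInt a b
  continuousOn_drift : ContinuousOn μ (stInt a b)
  continuousOn_volatility : ContinuousOn σ (stInt a b)
  volatility_sq_pos : ∀ x ∈ stInt a b, 0 < σ x ^ 2
  integrableOn_mDen : ∀ x ∈ stInt a b, IntegrableOn (mDen μ σ x₀) (Ioo a x)

namespace RegularDiffusion

variable {a : ℝ} {b : EReal} {μ σ c : ℝ → ℝ} {x₀ w x y p K γ : ℝ}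

theorem hasDerivAt_inv_sDen (h : RegularDiffusion a b μ σ x₀) (hx : x ∈ stInt a b) :
    HasDerivAt (fun x ↦ (sDen μ σ x₀ x)⁻¹) (μ x * mDen μ σ x₀ x) x := by
  have hq : ContinuousOn (fun y ↦ 2 * μ y / σ y ^ 2) (stInt a b) :=
    (h.continuousOn_drift.const_mul 2).div (h.continuousOn_volatility.pow 2)
      fun x hx ↦ (h.volatility_sq_pos x hx).ne'
  have hexp := (hasDerivAt_intervalIntegral_of_continuousOn (isOpen_stInt a b) hq h.base_mem
    hx).exp
  have hinv (t : ℝ) : (sDen μ σ x₀ t)⁻¹ = Real.exp (∫ y in x₀..t, 2 * μ y / σ y ^ 2) := by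
    rw [sDen, Real.exp_neg, inv_inv]
  simp only [← hinv] at hexp
  convert hexp using 1
  rw [mDen]
  field_simp

theorem continuousOn_sDen (h : RegularDiffusion a b μ σ x₀) :
    ContinuousOn (sDen μ σ x₀) (stInt a b) := fun x hx ↦ by
  simpa only [Pi.inv_def, inv_inv] using ((h.hasDerivAt_inv_sDen hx).continuousAt.inv₀
    (inv_ne_zero (sDen_pos μ σ x₀ x).ne')).continuousWithinAt

theorem Mab_pos (h : RegularDiffusion a b μ σ x₀) (hx : x ∈ stInt a b) :
    0 < Mab μ σ x₀ a x := by
  rw [Mab, ← integral_Ioc_eq_integral_Ioo, ← intervalIntegral.integral_of_le hx.1.le]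
  refine intervalIntegral.intervalIntegral_pos_of_pos_on ?_ (fun t ht ↦ ?_) hx.1
  · exact (intervalIntegrable_iff_integrableOn_Ioo_of_le hx.1.le).2 (h.integrableOn_mDen x hx)
  · exact div_pos two_pos (mul_pos (h.volatility_sq_pos t (Ioo_subset_stInt hx ht))
      (sDen_pos μ σ x₀ t))

theorem integrableOn_drift_mul_mDen (h : RegularDiffusion a b μ σ x₀) {μa : ℝ}
    (hμa : Tendsto μ (𝓝[>] a) (𝓝 μa)) (hx : x ∈ stInt a b) :
    IntegrableOn (fun u ↦ μ u * mDen μ σ x₀ u) (Ioo a x) := by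
  have hcont : ContinuousOn μ (Ioo a x) := h.continuousOn_drift.mono (Ioo_subset_stInt hx)
  have hμx : ContinuousAt μ x := h.continuousOn_drift.continuousAt ((isOpen_stInt a b).mem_nhds hx)
  exact integrableOn_mul_of_isBounded_image measurableSet_Ioo hcont
    (isBounded_image_Ioo_of_tendsto hcont hμa (hμx.mono_left nhdsWithin_le_nhds))
    (h.integrableOn_mDen x hx)

theorem setIntegral_drift_mul_mDen (h : RegularDiffusion a b μ σ x₀)
    (hsa : Tendsto (sDen μ σ x₀) (𝓝[>] a) atTop) (hx : x ∈ stInt a b)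
    (hμm : IntegrableOn (fun u ↦ μ u * mDen μ σ x₀ u) (Ioo a x)) :
    ∫ u in Ioo a x, μ u * mDen μ σ x₀ u = (sDen μ σ x₀ x)⁻¹ := by
  rw [← integral_Ioc_eq_integral_Ioo, ← intervalIntegral.integral_of_le hx.1.le,
    intervalIntegral.integral_eq_sub_of_hasDerivAt_of_tendsto hx.1
      (fun t ht ↦ h.hasDerivAt_inv_sDen (Ioo_subset_stInt hx ht))
      ((intervalIntegrable_iff_integrableOn_Ioo_of_le hx.1.le).2 hμm) hsa.inv_tendsto_atTop
      ((h.hasDerivAt_inv_sDen hx).continuousAt.mono_left nhdsWithin_le_nhds), sub_zero]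

theorem hF_eq (h : RegularDiffusion a b μ σ x₀) (hsa : Tendsto (sDen μ σ x₀) (𝓝[>] a) atTop)
    (hx : x ∈ stInt a b) (hcm : IntegrableOn (fun u ↦ c u * mDen μ σ x₀ u) (Ioo a x))
    (hμm : IntegrableOn (fun u ↦ μ u * mDen μ σ x₀ u) (Ioo a x)) :
    hF μ σ c x₀ a p γ x = γ * weightedMean volume (mDen μ σ x₀) c (Ioo a x)
      + p * (sDen μ σ x₀ x * Mab μ σ x₀ a x)⁻¹ := by
  have hsum : ∫ u in Ioo a x, (γ * c u + p * μ u) * mDen μ σ x₀ u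
      = γ * (∫ u in Ioo a x, c u * mDen μ σ x₀ u) + p * (sDen μ σ x₀ x)⁻¹ := by
    rw [← h.setIntegral_drift_mul_mDen hsa hx hμm, ← integral_const_mul, ← integral_const_mul,
      ← integral_add (hcm.const_mul γ) (hμm.const_mul p)]
    simp only [add_mul, mul_assoc]
  rw [hF, hsum, weightedMean, Mab, mul_inv]
  ring

theorem hF_mul_Mab_mul_sDen (h : RegularDiffusion a b μ σ x₀)
    (hsa : Tendsto (sDen μ σ x₀) (𝓝[>] a) atTop) (hx : x ∈ stInt a b)
    (hcm : IntegrableOn (fun u ↦ c u * mDen μ σ x₀ u) (Ioo a x))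
    (hμm : IntegrableOn (fun u ↦ μ u * mDen μ σ x₀ u) (Ioo a x)) :
    hF μ σ c x₀ a p γ x * (Mab μ σ x₀ a x * sDen μ σ x₀ x)
      = p + γ * ((∫ u in Ioo a x, c u * mDen μ σ x₀ u) * sDen μ σ x₀ x) := by
  have hs := (sDen_pos μ σ x₀ x).ne'
  have hM := (h.Mab_pos hx).ne'
  rw [h.hF_eq hsa hx hcm hμm, weightedMean, ← Mab]
  field_simp
  ring

theorem continuousOn_setIntegral_mul_sDen (h : RegularDiffusion a b μ σ x₀) {f : ℝ → ℝ}
    (hf : ∀ x ∈ stInt a b, IntegrableOn f (Ioo a x)) :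
    ContinuousOn (fun v ↦ (∫ u in Ioo a v, f u) * sDen μ σ x₀ v) (stInt a b) :=
  (continuousOn_setIntegral_Ioo hf).mul h.continuousOn_sDen

theorem xiF_sub_xiF (h : RegularDiffusion a b μ σ x₀) (hw : w ∈ stInt a b) (hy : y ∈ stInt a b) :
    xiF μ σ x₀ a y - xiF μ σ x₀ a w = ∫ v in w..y, Mab μ σ x₀ a v * sDen μ σ x₀ v := by
  have hcont := h.continuousOn_setIntegral_mul_sDen h.integrableOn_mDen
  exact intervalIntegral.integral_interval_sub_left
    (intervalIntegrable_of_continuousOn_of_mem hcont h.base_mem hy)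
    (intervalIntegrable_of_continuousOn_of_mem hcont h.base_mem hw)

theorem gF_sub_gF (h : RegularDiffusion a b μ σ x₀)
    (hcm : ∀ x ∈ stInt a b, IntegrableOn (fun u ↦ c u * mDen μ σ x₀ u) (Ioo a x))
    (hw : w ∈ stInt a b) (hy : y ∈ stInt a b) :
    gF μ σ c x₀ a y - gF μ σ c x₀ a w
      = ∫ v in w..y, (∫ u in Ioo a v, c u * mDen μ σ x₀ u) * sDen μ σ x₀ v := by
  have hcont := h.continuousOn_setIntegral_mul_sDen hcm
  exact intervalIntegral.integral_interval_sub_left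
    (intervalIntegrable_of_continuousOn_of_mem hcont h.base_mem hy)
    (intervalIntegrable_of_continuousOn_of_mem hcont h.base_mem hw)

theorem strictMonoOn_xiF (h : RegularDiffusion a b μ σ x₀) :
    StrictMonoOn (xiF μ σ x₀ a) (stInt a b) := by
  intro w hw y hy hwy
  rw [← sub_pos, h.xiF_sub_xiF hw hy]
  refine intervalIntegral.intervalIntegral_pos_of_pos_on (intervalIntegrable_of_continuousOn_of_mem
    (h.continuousOn_setIntegral_mul_sDen h.integrableOn_mDen) hw hy) (fun v hv ↦ ?_) hwy
  have hv : v ∈ stInt a b := Set.Icc_subset _ hw hy (Ioo_subset_Icc_self hv)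
  exact mul_pos (h.Mab_pos hv) (sDen_pos μ σ x₀ v)

theorem FF_le_of_hF_le (h : RegularDiffusion a b μ σ x₀)
    (hsa : Tendsto (sDen μ σ x₀) (𝓝[>] a) atTop)
    (hcm : ∀ x ∈ stInt a b, IntegrableOn (fun u ↦ c u * mDen μ σ x₀ u) (Ioo a x))
    (hμm : ∀ x ∈ stInt a b, IntegrableOn (fun u ↦ μ u * mDen μ σ x₀ u) (Ioo a x))
    (hK : 0 ≤ K) {k : ℝ} (hk : ∀ x ∈ stInt a b, hF μ σ c x₀ a p γ x ≤ k)
    (hw : w ∈ stInt a b) (hwy : w < y) (hy : y ∈ stInt a b) : FF μ σ c x₀ a p K γ w y ≤ k := by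
  set ξ' : ℝ → ℝ := fun v ↦ Mab μ σ x₀ a v * sDen μ σ x₀ v
  set g' : ℝ → ℝ := fun v ↦ (∫ u in Ioo a v, c u * mDen μ σ x₀ u) * sDen μ σ x₀ v
  have hξ'_cont : ContinuousOn ξ' (stInt a b) :=
    h.continuousOn_setIntegral_mul_sDen h.integrableOn_mDen
  have hg'_cont : ContinuousOn g' (stInt a b) := h.continuousOn_setIntegral_mul_sDen hcm
  have hpointwise : ∀ v ∈ Icc w y, p + γ * g' v ≤ k * ξ' v := fun v hv ↦ by
    have hv : v ∈ stInt a b := Set.Icc_subset _ hw hy hv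
    rw [← h.hF_mul_Mab_mul_sDen hsa hv (hcm v hv) (hμm v hv)]
    exact mul_le_mul_of_nonneg_right (hk v hv) (mul_pos (h.Mab_pos hv) (sDen_pos μ σ x₀ v)).le
  have hintegral : p * (y - w) + γ * ∫ v in w..y, g' v ≤ k * ∫ v in w..y, ξ' v := calc
    p * (y - w) + γ * ∫ v in w..y, g' v = ∫ v in w..y, (p + γ * g' v) := by
      rw [intervalIntegral.integral_add intervalIntegrable_const
        ((intervalIntegrable_of_continuousOn_of_mem hg'_cont hw hy).const_mul γ),
        intervalIntegral.integral_const, intervalIntegral.integral_const_mul, smul_eq_mul,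
        mul_comm p]
    _ ≤ ∫ v in w..y, k * ξ' v := intervalIntegral.integral_mono_on hwy.le
      (intervalIntegrable_of_continuousOn_of_mem
        (continuousOn_const.add (hg'_cont.const_mul γ)) hw hy)
      (intervalIntegrable_of_continuousOn_of_mem (hξ'_cont.const_mul k) hw hy) hpointwise
    _ = k * ∫ v in w..y, ξ' v := intervalIntegral.integral_const_mul k ξ'
  rw [FF, div_le_iff₀ (sub_pos.2 (h.strictMonoOn_xiF hw hy hwy)), h.xiF_sub_xiF hw hy,
    h.gF_sub_gF hcm hw hy]
  linarith

theorem weightedMean_le_cbar (h : RegularDiffusion a b μ σ x₀) (hc : ContinuousOn c (stInt a b))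
    (hcmono : MonotoneOn c (stInt a b)) (hcbdd : BddBelow (c '' stInt a b)) {cb : ℝ}
    (hcb : Tendsto c (atB b) (𝓝 cb)) (hx : x ∈ stInt a b) :
    weightedMean volume (mDen μ σ x₀) c (Ioo a x) ≤ cbar μ σ c x₀ a b cb := by
  have hmeas : MeasurableSet (stInt a b) := (isOpen_stInt a b).measurableSet
  have hbdd := isBounded_image_of_monotoneOn_of_tendsto_atB hcmono hcb hcbdd
  have hpos := h.Mab_pos hx
  have hsub := Ioo_subset_stInt hx
  rw [cbar]
  split_ifs with hmass
  · rw [Mab, ← stInt_inter_Iio hx] at hpos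
    rw [← stInt_inter_Iio hx]
    exact weightedMean_inter_Iio_le hmeas (fun u _ ↦ mDen_nonneg μ σ x₀ u) hmass
      (integrableOn_mul_of_isBounded_image hmeas hc hbdd hmass) hcmono hx hpos
  · rw [weightedMean, ← Mab, div_le_iff₀ hpos]
    exact setIntegral_mul_le_const_mul measurableSet_Ioo (fun u _ ↦ mDen_nonneg μ σ x₀ u)
      (h.integrableOn_mDen x hx) (integrableOn_mul_of_isBounded_image measurableSet_Ioo
        (hc.mono hsub) (hbdd.subset (image_mono hsub)) (h.integrableOn_mDen x hx))
      fun u hu ↦ le_of_monotoneOn_of_tendsto_atB hcmono hcb (hsub hu)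

theorem monotoneOn_hF (h : RegularDiffusion a b μ σ x₀)
    (hrm : ∀ x ∈ stInt a b, IntegrableOn (fun u ↦ (γ * c u + p * μ u) * mDen μ σ x₀ u) (Ioo a x))
    (hrmono : MonotoneOn (fun x ↦ γ * c x + p * μ x) (stInt a b)) :
    MonotoneOn (hF μ σ c x₀ a p γ) (stInt a b) := by
  intro x hx y hy hxy
  rcases hxy.eq_or_lt with rfl | hxy
  · rfl
  have hIoo : Ioo a y ∩ Iio x = Ioo a x := by rw [Ioo_inter_Iio, min_eq_right hxy.le]
  have hmono : MonotoneOn (fun x ↦ γ * c x + p * μ x) (Ioo a y) :=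
    hrmono.mono (Ioo_subset_stInt hy)
  have hpos := h.Mab_pos hx
  rw [Mab, ← hIoo] at hpos
  have hle := weightedMean_inter_Iio_le measurableSet_Ioo (fun u _ ↦ mDen_nonneg μ σ x₀ u)
    (h.integrableOn_mDen y hy) (hrm y hy) hmono ⟨hx.1, hxy⟩ hpos
  rwa [hIoo] at hle

theorem hF_le_mul_cbar (h : RegularDiffusion a b μ σ x₀)
    (hsa : Tendsto (sDen μ σ x₀) (𝓝[>] a) atTop)
    (hsMb : Tendsto (fun x ↦ sDen μ σ x₀ x * Mab μ σ x₀ a x) (atB b) atTop)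
    (hcm : ∀ x ∈ stInt a b, IntegrableOn (fun u ↦ c u * mDen μ σ x₀ u) (Ioo a x))
    (hμm : ∀ x ∈ stInt a b, IntegrableOn (fun u ↦ μ u * mDen μ σ x₀ u) (Ioo a x))
    {k : ℝ} (hk : ∀ x ∈ stInt a b, weightedMean volume (mDen μ σ x₀) c (Ioo a x) ≤ k)
    (hγ : 0 ≤ γ) (hrmono : MonotoneOn (fun x ↦ γ * c x + p * μ x) (stInt a b))
    (hx : x ∈ stInt a b) : hF μ σ c x₀ a p γ x ≤ γ * k := by
  have hlim : Tendsto (fun y ↦ γ * k + p * (sDen μ σ x₀ y * Mab μ σ x₀ a y)⁻¹) (atB b)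
      (𝓝 (γ * k)) := by
    simpa using (hsMb.inv_tendsto_atTop.const_mul p).const_add (γ * k)
  refine ge_of_tendsto hlim ?_
  filter_upwards [eventually_mem_stInt_atB hx.2] with y hxy
  have hy : y ∈ stInt a b := ⟨hx.1.trans hxy.1, hxy.2⟩
  calc hF μ σ c x₀ a p γ x ≤ hF μ σ c x₀ a p γ y :=
        h.monotoneOn_hF (fun x hx ↦ integrableOn_revenue_mul_mDen (hcm x hx) (hμm x hx)) hrmono
          hx hy hxy.1.le
    _ = γ * weightedMean volume (mDen μ σ x₀) c (Ioo a y)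
          + p * (sDen μ σ x₀ y * Mab μ σ x₀ a y)⁻¹ := h.hF_eq hsa hy (hcm y hy) (hμm y hy)
    _ ≤ γ * k + p * (sDen μ σ x₀ y * Mab μ σ x₀ a y)⁻¹ := by
        gcongr
        exact hk y hy

theorem not_monotoneOn_revenue (h : RegularDiffusion a b μ σ x₀)
    (hsa : Tendsto (sDen μ σ x₀) (𝓝[>] a) atTop)
    (hsMb : Tendsto (fun x ↦ sDen μ σ x₀ x * Mab μ σ x₀ a x) (atB b) atTop)
    {μa : ℝ} (hμa : Tendsto μ (𝓝[>] a) (𝓝 μa)) (hc : ContinuousOn c (stInt a b))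
    (hcmono : MonotoneOn c (stInt a b)) (hcbdd : BddBelow (c '' stInt a b)) {cb : ℝ}
    (hcb : Tendsto c (atB b) (𝓝 cb)) (hK : 0 ≤ K) (hγ : 0 ≤ γ) (hw : w ∈ stInt a b)
    (hwy : w < y) (hy : y ∈ stInt a b)
    (hFF : γ * cbar μ σ c x₀ a b cb < FF μ σ c x₀ a p K γ w y) :
    ¬ MonotoneOn (fun x ↦ γ * c x + p * μ x) (stInt a b) := by
  intro hrmono
  have hbdd := isBounded_image_of_monotoneOn_of_tendsto_atB hcmono hcb hcbdd
  have hcm : ∀ x ∈ stInt a b, IntegrableOn (fun u ↦ c u * mDen μ σ x₀ u) (Ioo a x) := fun x hx ↦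
    integrableOn_mul_of_isBounded_image measurableSet_Ioo (hc.mono (Ioo_subset_stInt hx))
      (hbdd.subset (image_mono (Ioo_subset_stInt hx))) (h.integrableOn_mDen x hx)
  have hμm := fun x (hx : x ∈ stInt a b) ↦ h.integrableOn_drift_mul_mDen hμa hx
  refine hFF.not_ge (h.FF_le_of_hF_le hsa hcm hμm hK (fun x hx ↦ ?_) hw hwy hy)
  exact h.hF_le_mul_cbar hsa hsMb hcm hμm
    (fun x hx ↦ h.weightedMean_le_cbar hc hcmono hcbdd hcb hx) hγ hrmono hx

end RegularDiffusion

theorem statement16_general {a : ℝ} {b : EReal} {μ σ : ℝ → ℝ} {x₀ : ℝ}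
    (h : RegularDiffusion a b μ σ x₀) (hsa : Tendsto (sDen μ σ x₀) (𝓝[>] a) atTop)
    (hsMb : Tendsto (fun x ↦ sDen μ σ x₀ x * Mab μ σ x₀ a x) (atB b) atTop)
    {μa : ℝ} (hμa : Tendsto μ (𝓝[>] a) (𝓝 μa)) {c : ℝ → ℝ} (hc : ContinuousOn c (stInt a b))
    (hcmono : MonotoneOn c (stInt a b)) (hcbdd : BddBelow (c '' stInt a b)) {cb : ℝ}
    (hcb : Tendsto c (atB b) (𝓝 cb)) {z : ℝ} (hz : z ∈ stInt a b)
    (hμmono : StrictMonoOn μ (Ioo a z)) (hμconc : ConcaveOn ℝ (stInt z b) μ)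
    (hcconc : ConcaveOn ℝ (stInt z b) c) {p K γ : ℝ} (hp : 0 < p) (hK : 0 ≤ K) (hγ : 0 ≤ γ)
    {w y : ℝ} (hw : w ∈ stInt a b) (hwy : w < y) (hy : y ∈ stInt a b)
    (hFF : γ * cbar μ σ c x₀ a b cb < FF μ σ c x₀ a p K γ w y) :
    ∃ xh xt : ℝ, xh ∈ stInt a b ∧ xt ∈ stInt a b ∧ xh ≤ xt ∧
      StrictMonoOn (fun x ↦ γ * c x + p * μ x) (Ioo a xh) ∧
      (∀ u ∈ Ioo xh xt, ∀ v ∈ Ioo xh xt, γ * c u + p * μ u = γ * c v + p * μ v) ∧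
      StrictAntiOn (fun x ↦ γ * c x + p * μ x) (stInt xt b) := by
  have hcont : ContinuousOn (fun x ↦ γ * c x + p * μ x) (stInt a b) :=
    (hc.const_mul γ).add (h.continuousOn_drift.const_mul p)
  have hmono : StrictMonoOn (fun x ↦ γ * c x + p * μ x) (stInt a b ∩ Iio z) := by
    rw [stInt_inter_Iio hz]
    intro x hx x' hx' hxx'
    have hcle : c x ≤ c x' := hcmono (Ioo_subset_stInt hz hx) (Ioo_subset_stInt hz hx') hxx'.le
    exact add_lt_add_of_le_of_lt (mul_le_mul_of_nonneg_left hcle hγ)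
      (mul_lt_mul_of_pos_left (hμmono hx hx' hxx') hp)
  have hconc : ConcaveOn ℝ (stInt a b ∩ Ioi z) (fun x ↦ γ * c x + p * μ x) := by
    rw [stInt_inter_Ioi hz]
    exact (hcconc.smul hγ).add (hμconc.smul hp.le)
  obtain ⟨l, hl, r, hr, hlr, hinc, hflat, hdec⟩ := exists_strictMonoOn_const_strictAntiOn
    (isOpen_stInt a b) hcont hz hmono hconc
    (h.not_monotoneOn_revenue hsa hsMb hμa hc hcmono hcbdd hcb hK hγ hw hwy hy hFF)
  rw [stInt_inter_Iio hl] at hinc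
  rw [stInt_inter_Ioi hr] at hdec
  exact ⟨l, r, hl, hr, hlr, hinc, fun u hu v hv ↦ (hflat u (Ioo_subset_Icc_self hu)).trans
    (hflat v (Ioo_subset_Icc_self hv)).symm, hdec⟩

theorem statement16    (a : ℝ) (b : EReal) (hab : (a : EReal) < b)
    (μ σ : ℝ → ℝ) (x₀ : ℝ) (hx₀ : x₀ ∈ stInt a b)
    (hμcont : ContinuousOn μ (stInt a b)) (hσcont : ContinuousOn σ (stInt a b))
    (hσpos : ∀ x ∈ stInt a b, 0 < (σ x) ^ 2)
    (hMfin : ∀ x ∈ stInt a b, IntegrableOn (mDen μ σ x₀) (Set.Ioo a x))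
    (hsa : Tendsto (sDen μ σ x₀) (𝓝[>] a) atTop)
    (hsMb : Tendsto (fun x => sDen μ σ x₀ x * Mab μ σ x₀ a x) (atB b) atTop)
    (hbnat : Tendsto (xiF μ σ x₀ a) (atB b) atTop)
    (μa : ℝ) (hμa : Tendsto μ (𝓝[>] a) (𝓝 μa))
    (c : ℝ → ℝ) (hccont : ContinuousOn c (stInt a b))
    (hcnn : ∀ x ∈ stInt a b, 0 ≤ c x) (hcmono : MonotoneOn c (stInt a b))
    (ca cb : ℝ) (hca : Tendsto c (𝓝[>] a) (𝓝 ca)) (hcb : Tendsto c (atB b) (𝓝 cb))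
    (hca0 : 0 ≤ ca) (hcacb : ca < cb)
    (xhat0 : ℝ) (hxhat0 : xhat0 ∈ stInt a b)
    (hμmono : StrictMonoOn μ (Set.Ioo a xhat0))
    (hμconc : ConcaveOn ℝ {x : ℝ | xhat0 < x ∧ (x : EReal) < b} μ)
    (hcconc : ConcaveOn ℝ {x : ℝ | xhat0 < x ∧ (x : EReal) < b} c)
    (p K γ : ℝ) (hp : 0 < p) (hK : 0 < K) (hγ : 0 < γ)
    (hint : ∃ w y : ℝ, a < w ∧ w < y ∧ (y : EReal) < b ∧
      γ * cbar μ σ c x₀ a b cb < FF μ σ c x₀ a p K γ w y) :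
    ∃ xh xt : ℝ, xh ∈ stInt a b ∧ xt ∈ stInt a b ∧ xh ≤ xt ∧
      StrictMonoOn (fun x => γ * c x + p * μ x) (Set.Ioo a xh) ∧
      (∀ u ∈ Set.Ioo xh xt, ∀ v ∈ Set.Ioo xh xt,
        γ * c u + p * μ u = γ * c v + p * μ v) ∧
      StrictAntiOn (fun x => γ * c x + p * μ x) {x : ℝ | xt < x ∧ (x : EReal) < b} := by
  obtain ⟨w, y, haw, hwy, hyb, hFF⟩ := hint
  have hw : w ∈ stInt a b := ⟨haw, (EReal.coe_lt_coe hwy).trans hyb⟩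
  exact statement16_general ⟨hx₀, hμcont, hσcont, hσpos, hMfin⟩ hsa hsMb hμa hccont hcmono
    ⟨0, forall_mem_image.2 hcnn⟩ hcb hxhat0 hμmono hμconc hcconc hp hK.le hγ.le hw hwy
    ⟨haw.trans hwy, hyb⟩ hFF
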